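/- Let f, g ∈ L¹(ℝ) ∩ L²(ℝ), let ψ ∈ L¹(ℝ) ∩ L²(ℝ), and fix α > 0. Then ∫_ℝ ∫_ℝ W^μ_f(ξ, β, α) · conj(W^μ_g(ξ, β, α)) dξ dβ = ‖ψ‖²_{L²(ℝ)} · ⟨f, g⟩_{L²(ℝ)}, where both transforms are taken with respect to the same wavelet ψ and ⟨f, g⟩_{L²(ℝ)} = ∫_ℝ f(t) conj(g(t)) dt. -/

import Mathlib

open MeasureTheory Complex

/-- The constant √(b/(2πi)) = √(b/(2π))·e^{−iπ/4}. -/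
noncomputable def qpConst (b : ℝ) : ℂ :=
  (Real.sqrt (b / (2 * Real.pi)) : ℂ) * Complex.exp (-((Real.pi / 4 : ℝ) : ℂ) * Complex.I)

/-- The dilation ψ_α(t) = α^{−1/2} ψ(t/α). -/
noncomputable def dil (ψ : ℝ → ℂ) (α : ℝ) (t : ℝ) : ℂ :=
  ((α ^ (-(1 / 2 : ℝ)) : ℝ) : ℂ) * ψ (t / α)

/-- The quadratic-phase Fourier transform. -/
noncomputable def QPFT (a b c d e : ℝ) (f : ℝ → ℂ) (ξ : ℝ) : ℂ :=
  qpConst b * ∫ t : ℝ, f t *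
    Complex.exp (Complex.I * ((a * t ^ 2 + b * t * ξ + c * ξ ^ 2 + d * t + e * ξ : ℝ) : ℂ))

/-- The quadratic-phase wave packet transform of `f` with respect to the wavelet `ψ`. -/
noncomputable def QPWPT (a b c d e : ℝ) (ψ f : ℝ → ℂ) (ξ β α : ℝ) : ℂ :=
  qpConst b * ∫ t : ℝ,
    Complex.exp (Complex.I * ((2 * a * t ^ 2 + b * t * ξ + c * ξ ^ 2 + 2 * d * t + e * ξ
      - a * β ^ 2 - d * β : ℝ) : ℂ)) * f t * (starRingEnd ℂ) (dil ψ α (t - β))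

/-- The analyzing packet ψ^μ_{ξ,β,α}. -/
noncomputable def qpwPacket (a b c d e : ℝ) (ψ : ℝ → ℂ) (ξ β α : ℝ) (t : ℝ) : ℂ :=
  (starRingEnd ℂ) (qpConst b) *
    Complex.exp (-Complex.I * ((2 * a * t ^ 2 + b * t * ξ + c * ξ ^ 2 + 2 * d * t + e * ξ
      - a * β ^ 2 - d * β : ℝ) : ℂ)) * dil ψ α (t - β)

open FourierTransform in
theorem aux_fourier_ae (h : ℝ → ℂ) (h1 : Integrable h volume) (h2 : MemLp h 2 volume) :
    ∀ᵐ x : ℝ, (𝓕 (h2.toLp h) : Lp ℂ 2 (volume : Measure ℝ)) x = 𝓕 h x := by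
  have hc : Continuous (𝓕 h) :=
    VectorFourier.fourierIntegral_continuous Real.continuous_fourierChar
      (innerSL ℝ).continuous₂ h1
  apply ae_eq_of_integral_contDiff_smul_eq
  · exact (Lp.memLp _).locallyIntegrable (by norm_num)
  · exact hc.locallyIntegrable
  · intro g g_smooth g_cpt
    have hg₁ : HasCompactSupport (Complex.ofRealCLM ∘ g) := g_cpt.comp_left rfl
    have hg₂ : ContDiff ℝ (↑(⊤ : ℕ∞)) (Complex.ofRealCLM ∘ g) := by fun_prop
    set G := hg₁.toSchwartzMap hg₂ with hG
    have hGx : ∀ x, G x = (g x : ℂ) := fun x => rfl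
    have key := congrArg (fun T => T G) (Lp.fourier_toTemperedDistribution_eq (h2.toLp h))
    simp only [TemperedDistribution.fourier_apply, Lp.toTemperedDistribution_apply] at key
    have e1 : ∫ x, (𝓕 G) x • (h2.toLp h : Lp ℂ 2 (volume : Measure ℝ)) x = ∫ x, (𝓕 G) x • h x := by
      apply integral_congr_ae
      filter_upwards [h2.coeFn_toLp] with x hx
      rw [hx]
    have e2 : ∫ x, (𝓕 G) x • h x = ∫ x, G x • 𝓕 h x := by
      simpa using! VectorFourier.integral_bilin_fourierIntegral_eq_flip (.lsmul ℂ ℂ)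
        (L := innerₗ ℝ) Real.continuous_fourierChar continuous_inner G.integrable h1
    calc ∫ x, g x • (𝓕 (h2.toLp h) : Lp ℂ 2 (volume : Measure ℝ)) x
        = ∫ x, G x • (𝓕 (h2.toLp h) : Lp ℂ 2 (volume : Measure ℝ)) x := by simp [hGx]
      _ = ∫ x, G x • 𝓕 h x := by rw [← key, e1, e2]
      _ = _ := by simp [hGx]

open FourierTransform in
theorem aux_plancherel (h k : ℝ → ℂ) (h1 : Integrable h volume) (h2 : MemLp h 2 volume)
    (k1 : Integrable k volume) (k2 : MemLp k 2 volume) :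
    ∫ x, 𝓕 h x * (starRingEnd ℂ) (𝓕 k x) = ∫ x, h x * (starRingEnd ℂ) (k x) := by
  have key := Lp.inner_fourier_eq (k2.toLp k : Lp ℂ 2 (volume : Measure ℝ)) (h2.toLp h)
  rw [L2.inner_def, L2.inner_def] at key
  have e1 : ∫ x, 𝓕 h x * (starRingEnd ℂ) (𝓕 k x) = ∫ a : ℝ, inner ℂ ((𝓕 (k2.toLp k) : Lp ℂ 2 (volume : Measure ℝ)) a) ((𝓕 (h2.toLp h) : Lp ℂ 2 (volume : Measure ℝ)) a) := by
    apply integral_congr_ae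
    filter_upwards [aux_fourier_ae h h1 h2, aux_fourier_ae k k1 k2] with x hx hy
    rw [hx, hy]; simp
  rw [e1, key]
  apply integral_congr_ae
  filter_upwards [h2.coeFn_toLp, k2.coeFn_toLp] with x hx hy
  rw [hx, hy]; simp

theorem aux_dil_sq (ψ : ℝ → ℂ) (α : ℝ) (hα : 0 < α) :
    ∫ s : ℝ, ‖dil ψ α (-s)‖ ^ 2 = ∫ t : ℝ, ‖ψ t‖ ^ 2 := by
  have h := integral_neg_eq_self (μ := volume) (fun s : ℝ => ‖dil ψ α s‖ ^ 2)
  rw [h]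
  have : ∀ s, ‖dil ψ α s‖ ^ 2 = α⁻¹ * ‖ψ (s / α)‖ ^ 2 := by
    intro s
    have : (α ^ (-(1 / 2 : ℝ))) ^ 2 = α⁻¹ := by
      rw [← Real.rpow_natCast, ← Real.rpow_mul hα.le]
      norm_num [Real.rpow_neg_one]
    rw [dil, norm_mul, mul_pow, Complex.norm_real, Real.norm_eq_abs, sq_abs, this]
  simp_rw [this]
  rw [integral_const_mul, Measure.integral_comp_div (fun x => ‖ψ x‖ ^ 2), abs_of_pos hα, smul_eq_mul,
    inv_mul_cancel_left₀ hα.ne']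

theorem aux_dil_memLp (ψ : ℝ → ℂ) (hψ2 : MemLp ψ 2 volume) (α : ℝ) (hα : 0 < α) (β : ℝ) :
    MemLp (fun t => dil ψ α (t - β)) 2 volume := by
  have hm : ∀ s, AEStronglyMeasurable (fun t => dil ψ α (t - s)) volume := by
    intro s
    have : Measure.QuasiMeasurePreserving (fun t : ℝ => (t - s) / α) volume volume := by
      have h1 := (measurePreserving_sub_right (volume : Measure ℝ) s).quasiMeasurePreserving
      have h2 : Measure.QuasiMeasurePreserving (fun t : ℝ => t / α) volume volume := by
        refine ⟨by fun_prop, ?_⟩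
        have := Real.map_volume_mul_right (inv_ne_zero hα.ne')
        simp_rw [div_eq_mul_inv]
        rw [this]
        exact Measure.smul_absolutelyContinuous
      exact h2.comp h1
    exact (hψ2.1.comp_quasiMeasurePreserving this).const_mul _
  rw [memLp_two_iff_integrable_sq_norm (hm β)]
  have : Integrable (fun t => ‖dil ψ α t‖ ^ 2) volume := by
    have h := hψ2
    rw [memLp_two_iff_integrable_sq_norm hψ2.1] at h
    have := (h.comp_div hα.ne').const_mul (‖((α ^ (-(1 / 2 : ℝ)) : ℝ) : ℂ)‖ ^ 2)
    refine this.congr (.of_forall fun t => ?_)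
    simp only [dil, norm_mul, mul_pow]
  exact this.comp_sub_right β

theorem aux_const (b : ℝ) (hb : 0 < b) :
    qpConst b * (starRingEnd ℂ) (qpConst b) = ((b / (2 * Real.pi) : ℝ) : ℂ) := by
  rw [Complex.mul_conj, Complex.normSq_eq_norm_sq, qpConst, norm_mul, Complex.norm_real,
    ← Complex.ofReal_neg, Complex.norm_exp_ofReal_mul_I, mul_one, Real.norm_eq_abs, sq_abs,
    Real.sq_sqrt (by positivity)]

noncomputable def auxH (a d : ℝ) (ψ f : ℝ → ℂ) (β α t : ℝ) : ℂ :=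
  Complex.exp (((2 * a * t ^ 2 + 2 * d * t : ℝ) : ℂ) * Complex.I) *
    (f t * (starRingEnd ℂ) (dil ψ α (t - β)))

theorem aux_W (a b c d e : ℝ) (ψ f : ℝ → ℂ) (ξ β α : ℝ) :
    QPWPT a b c d e ψ f ξ β α = qpConst b *
      (Complex.exp (((c * ξ ^ 2 + e * ξ - a * β ^ 2 - d * β : ℝ) : ℂ) * Complex.I) *
       (FourierTransform.fourier (auxH a d ψ f β α) : ℝ → ℂ) (-(b / (2 * Real.pi)) * ξ)) := by
  rw [QPWPT, Real.fourier_real_eq_integral_exp_smul]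
  congr 1
  rw [← integral_const_mul]
  refine integral_congr_ae (.of_forall fun t => ?_)
  simp only [auxH, smul_eq_mul, ← mul_assoc, ← Complex.exp_add]
  congr 3
  have : (Real.pi : ℂ) ≠ 0 := by exact_mod_cast Real.pi_ne_zero
  push_cast
  field_simp
  ring

theorem aux_inner (a b c d e : ℝ) (hb : 0 < b) (f g ψ : ℝ → ℂ) (β α : ℝ)
    (hf1 : Integrable (auxH a d ψ f β α)) (hf2 : MemLp (auxH a d ψ f β α) 2 volume)
    (hg1 : Integrable (auxH a d ψ g β α)) (hg2 : MemLp (auxH a d ψ g β α) 2 volume) :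
    ∫ ξ : ℝ, QPWPT a b c d e ψ f ξ β α * (starRingEnd ℂ) (QPWPT a b c d e ψ g ξ β α)
      = ∫ t : ℝ, (f t * (starRingEnd ℂ) (g t)) * ((‖dil ψ α (t - β)‖ ^ 2 : ℝ) : ℂ) := by
  have hexp : ∀ x : ℝ, Complex.exp ((x : ℂ) * Complex.I) *
      (starRingEnd ℂ) (Complex.exp ((x : ℂ) * Complex.I)) = 1 := by
    intro x
    rw [Complex.mul_conj, Complex.normSq_eq_norm_sq, Complex.norm_exp_ofReal_mul_I]; simp
  set F : ℝ → ℂ := FourierTransform.fourier (auxH a d ψ f β α) with hF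
  set G : ℝ → ℂ := FourierTransform.fourier (auxH a d ψ g β α) with hG
  have e1 : ∀ ξ : ℝ, QPWPT a b c d e ψ f ξ β α * (starRingEnd ℂ) (QPWPT a b c d e ψ g ξ β α)
      = ((b / (2 * Real.pi) : ℝ) : ℂ) * (fun w => F w * (starRingEnd ℂ) (G w))
          (-(b / (2 * Real.pi)) * ξ) := by
    intro ξ
    rw [aux_W, aux_W, ← hF, ← hG, ← aux_const b hb]
    simp only [map_mul]
    linear_combination (qpConst b * (starRingEnd ℂ) (qpConst b) * F (-(b / (2 * Real.pi)) * ξ) *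
      (starRingEnd ℂ) (G (-(b / (2 * Real.pi)) * ξ))) *
      hexp (c * ξ ^ 2 + e * ξ - a * β ^ 2 - d * β)
  have hp : 0 < b / (2 * Real.pi) := by positivity
  simp_rw [e1]
  rw [integral_const_mul, Measure.integral_comp_mul_left (fun w => F w * (starRingEnd ℂ) (G w)),
    abs_inv, abs_neg, abs_of_pos hp, hF, hG, aux_plancherel _ _ hf1 hf2 hg1 hg2,
    Complex.real_smul, ← mul_assoc, ← Complex.ofReal_mul, mul_inv_cancel₀ hp.ne',
    Complex.ofReal_one, one_mul]
  refine integral_congr_ae (.of_forall fun t => ?_)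
  simp only [auxH, map_mul, Complex.conj_conj]
  rw [← Complex.normSq_eq_norm_sq, ← Complex.mul_conj]
  have hh := hexp (2 * a * t ^ 2 + 2 * d * t)
  linear_combination (f t * (starRingEnd ℂ) (g t) * (dil ψ α (t - β)) *
    (starRingEnd ℂ) (dil ψ α (t - β))) * hh

theorem aux_H_int (a d : ℝ) (f ψ : ℝ → ℂ) (hf2 : MemLp f 2 volume) (hψ2 : MemLp ψ 2 volume)
    (α : ℝ) (hα : 0 < α) (β : ℝ) : Integrable (auxH a d ψ f β α) := by
  have h := MemLp.integrable_mul hf2 (aux_dil_memLp ψ hψ2 α hα β).star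
  refine h.bdd_mul (c := 1) (by fun_prop) (.of_forall fun t => ?_)
  rw [Complex.norm_exp_ofReal_mul_I]

theorem aux_H_L2 (a d : ℝ) (f ψ : ℝ → ℂ) (hf2 : MemLp f 2 volume) (hψ2 : MemLp ψ 2 volume)
    (α : ℝ) (hα : 0 < α) : ∀ᵐ β : ℝ, MemLp (auxH a d ψ f β α) 2 volume := by
  have h1 : Integrable (fun t => ‖f t‖ ^ 2) volume :=
    (memLp_two_iff_integrable_sq_norm hf2.1).1 hf2
  have h2 : Integrable (fun s => ‖dil ψ α (-s)‖ ^ 2) volume := by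
    have h := aux_dil_memLp ψ hψ2 α hα 0
    rw [memLp_two_iff_integrable_sq_norm h.1] at h
    simpa using h.comp_neg
  filter_upwards [h1.ae_convolution_exists (ContinuousLinearMap.mul ℝ ℝ) h2] with β hβ
  rw [memLp_two_iff_integrable_sq_norm (aux_H_int a d f ψ hf2 hψ2 α hα β).1]
  refine Integrable.congr hβ (.of_forall fun t => ?_)
  simp only [auxH, norm_mul, Complex.norm_exp_ofReal_mul_I, one_mul, RCLike.norm_conj, mul_pow,
    ContinuousLinearMap.mul_apply', neg_sub]

theorem qpwpt_moyal_same_wavelet (a b c d e : ℝ) (hb : 0 < b) (f g ψ : ℝ → ℂ)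
    (hf1 : Integrable f volume) (hf2 : MemLp f 2 volume)
    (hg1 : Integrable g volume) (hg2 : MemLp g 2 volume)
    (hψ1 : Integrable ψ volume) (hψ2 : MemLp ψ 2 volume)
    (α : ℝ) (hα : 0 < α) :
    ∫ β : ℝ, ∫ ξ : ℝ,
        QPWPT a b c d e ψ f ξ β α * (starRingEnd ℂ) (QPWPT a b c d e ψ g ξ β α)
      = ((∫ t : ℝ, ‖ψ t‖ ^ 2 : ℝ) : ℂ) * ∫ t : ℝ, f t * (starRingEnd ℂ) (g t) := by
  have h2 : Integrable (fun s => ((‖dil ψ α (-s)‖ ^ 2 : ℝ) : ℂ)) volume := by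
    have h := aux_dil_memLp ψ hψ2 α hα 0
    rw [memLp_two_iff_integrable_sq_norm h.1] at h
    have h' : Integrable (fun s => ‖dil ψ α (-s)‖ ^ 2) volume := by simpa using h.comp_neg
    exact h'.ofReal
  have hfg : Integrable (fun t => f t * (starRingEnd ℂ) (g t)) volume :=
    MemLp.integrable_mul hf2 hg2.star
  have key := integral_convolution (ContinuousLinearMap.mul ℝ ℂ) hfg h2
  rw [integral_complex_ofReal, aux_dil_sq ψ α hα, ContinuousLinearMap.mul_apply'] at key
  rw [mul_comm, ← key]
  apply integral_congr_ae
  filter_upwards [aux_H_L2 a d f ψ hf2 hψ2 α hα, aux_H_L2 a d g ψ hg2 hψ2 α hα] with β hβ hβ'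
  rw [aux_inner a b c d e hb f g ψ β α (aux_H_int a d f ψ hf2 hψ2 α hα β) hβ
    (aux_H_int a d g ψ hg2 hψ2 α hα β) hβ']
  simp only [convolution, ContinuousLinearMap.mul_apply', neg_sub]
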